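/- Let H₀, H₁, H₂ be complex Hilbert spaces and let S : H₀ →ₗ.[ℂ] H₁ and T : H₁ →ₗ.[ℂ] H₂ be densely defined closed unbounded operators such that range S ⊆ ker T. Then the following are equivalent: (a) there exists c > 0 such that c·‖u‖² ≤ ‖T u‖² + ‖S† u‖² for every u ∈ dom T ∩ dom S†; (b) range S is closed in H₁, range T is closed in H₂, and ker T = range S. -/

import Mathlib

/-!
Split `H₁ = ker T ⊕ (ker T)ᗮ`. Since `range S ⊆ ker T`, the second summand lies in
`(range S)ᗮ = ker S†`, so `S†` sees only the first component of `u` and `T` only the second. By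
Pythagoras the estimate therefore decouples into two lower bounds: one for `T` on `(ker T)ᗮ` and
one for `S†` on `ker T`. By the open mapping theorem the first says that `range T` is closed. By
duality (Hahn–Banach, Riesz and `S†† = S`) the second says that `S` maps onto `ker T`, which is
closed because `T` is.
-/

namespace UnboundedOperator

open scoped LinearPMap InnerProductSpace

section Kernel

variable {R E F : Type*} [Ring R] [AddCommGroup E] [Module R E] [AddCommGroup F] [Module R F]

/-- The kernel of a partially defined operator, as a submodule of the ambient space instead of
the domain. -/
def ker (T : E →ₗ.[R] F) : Submodule R E :=
  (LinearMap.ker T.toFun).map T.domain.subtype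

variable {T : E →ₗ.[R] F} {M : Submodule R E}

theorem mem_ker {u : E} : u ∈ ker T ↔ ∃ hu : u ∈ T.domain, T ⟨u, hu⟩ = 0 := by
  simp [ker]

theorem coe_ker (T : E →ₗ.[R] F) :
    (ker T : Set E) = {u | ∃ hu : u ∈ T.domain, T ⟨u, hu⟩ = 0} :=
  Set.ext fun _ => mem_ker

theorem coe_range_toFun (T : E →ₗ.[R] F) :
    (LinearMap.range T.toFun : Set F) = Set.range fun x : T.domain => T x :=
  LinearMap.coe_range _

theorem ker_le_domain (T : E →ₗ.[R] F) : ker T ≤ T.domain :=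
  Submodule.map_subtype_le _ _

theorem apply_eq_iff_sub_mem_ker {x y : T.domain} : T x = T y ↔ (x : E) - y ∈ ker T := by
  rw [mem_ker, ← sub_eq_zero, ← T.map_sub]
  exact ⟨fun h => ⟨(x - y).2, h⟩, fun ⟨_, h⟩ => h⟩

theorem ker_eq_comap_graph (T : E →ₗ.[R] F) : ker T = T.graph.comap (LinearMap.inl R E F) := by
  ext u
  simp [mem_ker]

theorem graph_domRestrict (T : E →ₗ.[R] F) (M : Submodule R E) :
    (T.domRestrict M).graph = T.graph ⊓ M.comap (LinearMap.fst R E F) := by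
  ext ⟨u, y⟩
  simp only [LinearPMap.mem_graph_iff, Submodule.mem_inf, Submodule.mem_comap, LinearMap.fst_apply]
  constructor
  · rintro ⟨x, rfl, rfl⟩
    exact ⟨⟨⟨x, x.2.2⟩, rfl, rfl⟩, x.2.1⟩
  · rintro ⟨⟨x, rfl, rfl⟩, hx⟩
    exact ⟨⟨x, hx, x.2⟩, rfl, rfl⟩

theorem ker_domRestrict_eq_bot (hM : Disjoint M (ker T)) :
    LinearMap.ker (T.domRestrict M).toFun = ⊥ := by
  rw [LinearMap.ker_eq_bot']
  rintro ⟨x, hxM, hxT⟩ hx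
  exact Subtype.ext (Submodule.disjoint_def.mp hM x hxM (mem_ker.mpr ⟨hxT, hx⟩))

theorem range_domRestrict_of_codisjoint (hM : Codisjoint M (ker T)) :
    LinearMap.range (T.domRestrict M).toFun = LinearMap.range T.toFun := by
  refine le_antisymm (LinearMap.range_comp_le_range _ _) ?_
  rintro _ ⟨x, rfl⟩
  obtain ⟨y, z, hy, hz, hyz⟩ := Submodule.codisjoint_iff_exists_add_eq.mp hM (x : E)
  have hyT : y ∈ T.domain := by
    rw [eq_sub_of_add_eq hyz]
    exact T.domain.sub_mem x.2 (ker_le_domain T hz)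
  have hyx : T ⟨y, hyT⟩ = T x := by
    rw [eq_comm, apply_eq_iff_sub_mem_ker, ← hyz, add_sub_cancel_left]
    exact hz
  exact ⟨⟨y, hy, hyT⟩, hyx⟩

end Kernel

section Normed

variable {𝕜 E F : Type*} [NontriviallyNormedField 𝕜]
  [NormedAddCommGroup E] [NormedSpace 𝕜 E] [NormedAddCommGroup F] [NormedSpace 𝕜 F]
  {T : E →ₗ.[𝕜] F} {M : Submodule 𝕜 E}

/-- A partially defined operator is bounded below if `c ‖x‖ ≤ ‖T x‖` on its domain for some
`c > 0`. To express such a lower bound on a subspace `M` only, apply this to `T.domRestrict M`. -/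
def IsBoundedBelow (T : E →ₗ.[𝕜] F) : Prop :=
  ∃ c > (0 : ℝ), ∀ x : T.domain, c * ‖(x : E)‖ ≤ ‖T x‖

theorem isBoundedBelow_domRestrict_iff :
    IsBoundedBelow (T.domRestrict M) ↔
      ∃ c > (0 : ℝ), ∀ x : T.domain, (x : E) ∈ M → c * ‖(x : E)‖ ≤ ‖T x‖ :=
  ⟨fun ⟨c, hc, h⟩ => ⟨c, hc, fun x hx => h ⟨x, hx, x.2⟩⟩,
    fun ⟨c, hc, h⟩ => ⟨c, hc, fun x => h ⟨x, x.2.2⟩ x.2.1⟩⟩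

theorem IsBoundedBelow.ker_eq_bot (hT : IsBoundedBelow T) : LinearMap.ker T.toFun = ⊥ := by
  obtain ⟨c, hc, h⟩ := hT
  rw [LinearMap.ker_eq_bot']
  intro x hx
  have hx' : c * ‖(x : E)‖ ≤ 0 := (h x).trans_eq (by rw [← T.toFun_eq_coe, hx, norm_zero])
  exact Subtype.ext (norm_le_zero_iff.mp (nonpos_of_mul_nonpos_right hx' hc))

theorem isClosed_ker (hT : T.IsClosed) : IsClosed (ker T : Set E) := by
  rw [ker_eq_comap_graph]
  have hgraph : IsClosed (T.graph : Set (E × F)) := hT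
  exact hgraph.preimage (by fun_prop : Continuous fun u : E => (u, (0 : F)))

theorem isClosed_domRestrict (hT : T.IsClosed) (hM : IsClosed (M : Set E)) :
    (T.domRestrict M).IsClosed := by
  rw [LinearPMap.IsClosed, graph_domRestrict]
  exact IsClosed.inter hT (hM.preimage continuous_fst)

theorem isBoundedBelow_iff_antilipschitzWith_snd_graph :
    IsBoundedBelow T ↔
      ∃ K, AntilipschitzWith K (ContinuousLinearMap.snd 𝕜 E F ∘L T.graph.subtypeL) := by
  rw [antilipschitzWith_iff_exists_mul_le_norm]
  constructor
  · rintro ⟨c, hc, h⟩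
    refine ⟨min c 1, by positivity, ?_⟩
    rintro ⟨⟨u, y⟩, hp⟩
    obtain ⟨x, rfl, rfl⟩ := T.mem_graph_iff.mp hp
    change min c 1 * max ‖(x : E)‖ ‖T x‖ ≤ ‖T x‖
    rw [mul_max_of_nonneg _ _ (by positivity)]
    refine max_le ?_ (mul_le_of_le_one_left (norm_nonneg _) (min_le_right _ _))
    calc min c 1 * ‖(x : E)‖ ≤ c * ‖(x : E)‖ := by gcongr; exact min_le_left _ _
      _ ≤ ‖T x‖ := h x
  · rintro ⟨c, hc, h⟩
    refine ⟨c, hc, fun x => ?_⟩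
    calc c * ‖(x : E)‖ ≤ c * ‖((x : E), T x)‖ := by gcongr; exact le_max_left _ _
      _ ≤ ‖T x‖ := h ⟨_, T.mem_graph x⟩

theorem isClosed_range_iff_isBoundedBelow [CompleteSpace E] [CompleteSpace F] (hT : T.IsClosed)
    (hker : LinearMap.ker T.toFun = ⊥) :
    IsClosed (LinearMap.range T.toFun : Set F) ↔ IsBoundedBelow T := by
  have hgraph : IsClosed (T.graph : Set (E × F)) := hT
  have : CompleteSpace T.graph := hgraph.completeSpace_coe
  let π : T.graph →L[𝕜] F := ContinuousLinearMap.snd 𝕜 E F ∘L T.graph.subtypeL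
  have hπ_range : Set.range π = LinearMap.range T.toFun := by
    ext y
    simp [π]
  have hπ_inj : Function.Injective π := by
    refine (injective_iff_map_eq_zero π).mpr ?_
    rintro ⟨⟨u, y⟩, hp⟩ (rfl : y = 0)
    obtain ⟨x, rfl, hx⟩ := T.mem_graph_iff.mp hp
    obtain rfl := LinearMap.ker_eq_bot'.mp hker x hx
    rfl
  rw [← hπ_range, π.isClosed_range_iff_antilipschitz_of_injective hπ_inj,
    isBoundedBelow_iff_antilipschitzWith_snd_graph]

end Normed

section Dual

variable {𝕜 E F : Type*} [RCLike 𝕜]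
  [NormedAddCommGroup E] [NormedSpace 𝕜 E] [NormedAddCommGroup F] [NormedSpace 𝕜 F]

theorem IsBoundedBelow.exists_dual_apply_eq {T : E →ₗ.[𝕜] F} (hT : IsBoundedBelow T)
    (φ : StrongDual 𝕜 E) : ∃ ψ : StrongDual 𝕜 F, ∀ x : T.domain, ψ (T x) = φ x := by
  let e : T.domain ≃ₗ[𝕜] LinearMap.range T.toFun :=
    LinearEquiv.ofInjective T.toFun (LinearMap.ker_eq_bot.mp hT.ker_eq_bot)
  obtain ⟨c, hc, h⟩ := hT
  let φ_inv : StrongDual 𝕜 (LinearMap.range T.toFun) :=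
    (φ.toLinearMap ∘ₗ T.domain.subtype ∘ₗ e.symm.toLinearMap).mkContinuous (‖φ‖ * c⁻¹) fun y => by
      obtain ⟨x, rfl⟩ := e.surjective y
      have hx : ‖(x : E)‖ ≤ c⁻¹ * ‖T x‖ := (le_inv_mul_iff₀ hc).mpr (h x)
      calc ‖φ (e.symm (e x))‖ = ‖φ x‖ := by rw [e.symm_apply_apply]
        _ ≤ ‖φ‖ * ‖(x : E)‖ := φ.le_opNorm x
        _ ≤ ‖φ‖ * (c⁻¹ * ‖T x‖) := by gcongr
        _ = ‖φ‖ * c⁻¹ * ‖e x‖ := (mul_assoc _ _ _).symm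
  obtain ⟨ψ, hψ, -⟩ := exists_extension_norm_eq _ φ_inv
  refine ⟨ψ, fun x => ?_⟩
  calc ψ (T x) = φ (e.symm (e x)) := hψ (e x)
    _ = φ x := by rw [e.symm_apply_apply]

end Dual

section Orthogonal

variable {𝕜 E F G : Type*} [RCLike 𝕜]
  [NormedAddCommGroup E] [InnerProductSpace 𝕜 E] [NormedAddCommGroup F] [NormedSpace 𝕜 F]
  [NormedAddCommGroup G] [NormedSpace 𝕜 G] {T : E →ₗ.[𝕜] F}

theorem isClosed_range_iff_isBoundedBelow_orthogonal_ker [CompleteSpace E] [CompleteSpace F]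
    (hT : T.IsClosed) :
    IsClosed (LinearMap.range T.toFun : Set F) ↔ IsBoundedBelow (T.domRestrict (ker T)ᗮ) := by
  have : CompleteSpace (ker T) := (isClosed_ker hT).completeSpace_coe
  have hcompl : IsCompl (ker T)ᗮ (ker T) := (ker T).isCompl_orthogonal.symm
  rw [← range_domRestrict_of_codisjoint hcompl.codisjoint]
  exact isClosed_range_iff_isBoundedBelow
    (isClosed_domRestrict hT (Submodule.isClosed_orthogonal _))
    (ker_domRestrict_eq_bot hcompl.disjoint)

theorem exists_mul_sq_le_iff_isBoundedBelow {A : E →ₗ.[𝕜] G}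
    {M : Submodule 𝕜 E} [M.HasOrthogonalProjection] (hT : M ≤ ker T) (hA : Mᗮ ≤ ker A) :
    (∃ c > (0 : ℝ), ∀ (u : E) (hu₁ : u ∈ T.domain) (hu₂ : u ∈ A.domain),
        c * ‖u‖ ^ 2 ≤ ‖T ⟨u, hu₁⟩‖ ^ 2 + ‖A ⟨u, hu₂⟩‖ ^ 2) ↔
      IsBoundedBelow (T.domRestrict Mᗮ) ∧ IsBoundedBelow (A.domRestrict M) := by
  simp only [isBoundedBelow_domRestrict_iff]
  constructor
  · rintro ⟨c, hc, h⟩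
    have of_sq {a b : ℝ} (hb : 0 ≤ b) (hab : c * a ^ 2 ≤ b ^ 2) : √c * a ≤ b :=
      le_of_sq_le_sq (by rwa [mul_pow, Real.sq_sqrt hc.le]) hb
    refine ⟨⟨√c, Real.sqrt_pos.mpr hc, fun x hx => of_sq (norm_nonneg _) ?_⟩,
      ⟨√c, Real.sqrt_pos.mpr hc, fun x hx => of_sq (norm_nonneg _) ?_⟩⟩
    · obtain ⟨hxA, hx0⟩ := mem_ker.mp (hA hx)
      simpa [hx0] using h x x.2 hxA
    · obtain ⟨hxT, hx0⟩ := mem_ker.mp (hT hx)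
      simpa [hx0] using h x hxT x.2
  · rintro ⟨⟨c, hc, hcT⟩, ⟨d, hd, hdA⟩⟩
    refine ⟨min c d ^ 2, by positivity, fun u hu₁ hu₂ => ?_⟩
    obtain ⟨p, hp, q, hq, rfl⟩ := M.exists_add_mem_mem_orthogonal u
    have hqT : q ∈ T.domain := (T.domain.add_mem_iff_right (ker_le_domain T (hT hp))).mp hu₁
    have hpA : p ∈ A.domain := (A.domain.add_mem_iff_left (ker_le_domain A (hA hq))).mp hu₂
    have hTq : T ⟨p + q, hu₁⟩ = T ⟨q, hqT⟩ :=
      apply_eq_iff_sub_mem_ker.mpr (by simpa using hT hp)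
    have hAp : A ⟨p + q, hu₂⟩ = A ⟨p, hpA⟩ :=
      apply_eq_iff_sub_mem_ker.mpr (by simpa using hA hq)
    have hpyth : ‖p + q‖ ^ 2 = ‖p‖ ^ 2 + ‖q‖ ^ 2 := by
      simpa only [sq] using
        norm_add_sq_eq_norm_sq_add_norm_sq_of_inner_eq_zero p q
          (M.inner_right_of_mem_orthogonal hp hq)
    have hq' : min c d * ‖q‖ ≤ ‖T ⟨q, hqT⟩‖ :=
      le_trans (by gcongr; exact min_le_left _ _) (hcT ⟨q, hqT⟩ hq)
    have hp' : min c d * ‖p‖ ≤ ‖A ⟨p, hpA⟩‖ :=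
      le_trans (by gcongr; exact min_le_right _ _) (hdA ⟨p, hpA⟩ hp)
    calc min c d ^ 2 * ‖p + q‖ ^ 2 = (min c d * ‖q‖) ^ 2 + (min c d * ‖p‖) ^ 2 := by
          rw [hpyth]; ring
      _ ≤ ‖T ⟨p + q, hu₁⟩‖ ^ 2 + ‖A ⟨p + q, hu₂⟩‖ ^ 2 := by
          rw [hTq, hAp]; gcongr

end Orthogonal

section Adjoint

variable {𝕜 E F : Type*} [RCLike 𝕜]
  [NormedAddCommGroup E] [InnerProductSpace 𝕜 E] [NormedAddCommGroup F] [InnerProductSpace 𝕜 F]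

theorem submodule_le_adjoint_adjoint (g : Submodule 𝕜 (E × F)) : g ≤ g.adjoint.adjoint := by
  intro x hx
  rw [Submodule.mem_adjoint_iff]
  intro a b hab
  have h : ⟪x.2, a⟫_𝕜 - ⟪x.1, b⟫_𝕜 = 0 := (Submodule.mem_adjoint_iff g _).mp hab x.1 x.2 hx
  rw [← inner_conj_symm, ← inner_conj_symm a, ← map_sub, ← neg_sub, h, neg_zero, map_zero]

theorem submodule_adjoint_adjoint [CompleteSpace E] [CompleteSpace F] {g : Submodule 𝕜 (E × F)}
    (hg : IsClosed (g : Set (E × F))) : g.adjoint.adjoint = g := by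
  refine le_antisymm (fun x hx => ?_) (submodule_le_adjoint_adjoint g)
  let g₂ : Submodule 𝕜 (WithLp 2 (E × F)) := g.comap (WithLp.linearEquiv 2 𝕜 (E × F)).toLinearMap
  have hg₂ : IsClosed (g₂ : Set (WithLp 2 (E × F))) :=
    hg.preimage (WithLp.prod_continuous_ofLp 2 E F)
  have : CompleteSpace g₂ := hg₂.completeSpace_coe
  suffices WithLp.toLp 2 x ∈ g₂ᗮᗮ by rwa [g₂.orthogonal_orthogonal] at this
  intro p hp
  have hp_adj : (p.snd, -p.fst) ∈ g.adjoint := by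
    rw [Submodule.mem_adjoint_iff]
    intro a b hab
    simpa [WithLp.prod_inner_apply, add_comm] using hp (WithLp.toLp 2 (a, b)) hab
  have hxp : ⟪-p.fst, x.1⟫_𝕜 - ⟪p.snd, x.2⟫_𝕜 = 0 :=
    (Submodule.mem_adjoint_iff _ _).mp hx _ _ hp_adj
  rw [inner_neg_left, ← neg_add', neg_eq_zero] at hxp
  exact hxp

variable [CompleteSpace E] {S : E →ₗ.[𝕜] F}

theorem ker_adjoint (hS : Dense (S.domain : Set E)) : ker S† = (LinearMap.range S.toFun)ᗮ := by
  ext v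
  rw [mem_ker, Submodule.mem_orthogonal']
  constructor
  · rintro ⟨hv, hv0⟩ _ ⟨x, rfl⟩
    have := LinearPMap.adjoint_isFormalAdjoint hS ⟨v, hv⟩ x
    rwa [hv0, inner_zero_left, eq_comm] at this
  · intro hv
    have h0 (x : S.domain) : ⟪(0 : E), x⟫_𝕜 = ⟪v, S x⟫_𝕜 := by
      rw [inner_zero_left]; exact (hv _ ⟨x, rfl⟩).symm
    exact ⟨LinearPMap.mem_adjoint_domain_of_exists v ⟨0, h0⟩, LinearPMap.adjoint_apply_eq hS _ h0⟩

variable [CompleteSpace F] {M : Submodule 𝕜 F}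

theorem mem_graph_of_inner_adjoint_eq (hS : Dense (S.domain : Set E)) (hSc : S.IsClosed)
    {w : E} {f : F} (h : ∀ v : S†.domain, ⟪w, S† v⟫_𝕜 = ⟪f, (v : F)⟫_𝕜) : (w, f) ∈ S.graph := by
  rw [← submodule_adjoint_adjoint hSc, ← LinearPMap.adjoint_graph_eq_graph_adjoint hS,
    Submodule.mem_adjoint_iff]
  intro a b hab
  obtain ⟨v, rfl, rfl⟩ := S†.mem_graph_iff.mp hab
  rw [← inner_conj_symm, h, inner_conj_symm, sub_self]

theorem isBoundedBelow_adjoint_domRestrict_range (hS : Dense (S.domain : Set E)) (hSc : S.IsClosed)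
    (hr : IsClosed (LinearMap.range S.toFun : Set F)) :
    IsBoundedBelow (S†.domRestrict (LinearMap.range S.toFun)) := by
  have : CompleteSpace (ker S) := (isClosed_ker hSc).completeSpace_coe
  obtain ⟨c, hc, h⟩ := (isClosed_range_iff_isBoundedBelow_orthogonal_ker hSc).mp hr
  refine isBoundedBelow_domRestrict_iff.mpr ⟨c, hc, fun v hv => ?_⟩
  rw [← range_domRestrict_of_codisjoint (ker S).isCompl_orthogonal.symm.codisjoint] at hv
  obtain ⟨x, hx : S ⟨x, x.2.2⟩ = v⟩ := hv
  have hxv : c * ‖(x : E)‖ ≤ ‖(v : F)‖ := (h x).trans_eq (congrArg norm hx)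
  have hv_sq : ‖(v : F)‖ * ‖(v : F)‖ ≤ ‖S† v‖ * ‖(x : E)‖ :=
    calc ‖(v : F)‖ * ‖(v : F)‖ = RCLike.re ⟪(v : F), S ⟨x, x.2.2⟩⟫_𝕜 := by
          rw [hx, inner_self_eq_norm_mul_norm]
      _ = RCLike.re ⟪S† v, (x : E)⟫_𝕜 := by rw [← LinearPMap.adjoint_isFormalAdjoint hS]
      _ ≤ ‖S† v‖ * ‖(x : E)‖ := re_inner_le_norm _ _
  rcases (norm_nonneg (v : F)).eq_or_lt with hv0 | hv0
  · rw [← hv0, mul_zero]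
    exact norm_nonneg _
  · refine le_of_mul_le_mul_right ?_ hv0
    calc c * ‖(v : F)‖ * ‖(v : F)‖ = c * (‖(v : F)‖ * ‖(v : F)‖) := mul_assoc _ _ _
      _ ≤ c * (‖S† v‖ * ‖(x : E)‖) := by gcongr
      _ = ‖S† v‖ * (c * ‖(x : E)‖) := mul_left_comm _ _ _
      _ ≤ ‖S† v‖ * ‖(v : F)‖ := by gcongr

theorem le_range_of_isBoundedBelow_adjoint (hS : Dense (S.domain : Set E)) (hSc : S.IsClosed)
    [M.HasOrthogonalProjection] (hM : LinearMap.range S.toFun ≤ M)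
    (hb : IsBoundedBelow (S†.domRestrict M)) : M ≤ LinearMap.range S.toFun := by
  intro f hf
  obtain ⟨ψ, hψ⟩ := hb.exists_dual_apply_eq (innerSL 𝕜 f)
  let w : E := (InnerProductSpace.toDual 𝕜 E).symm ψ
  have hker : Mᗮ ≤ ker S† := (ker_adjoint hS).symm ▸ Submodule.orthogonal_le hM
  have hgraph : (w, f) ∈ S.graph := by
    refine mem_graph_of_inner_adjoint_eq hS hSc fun ⟨v, hv⟩ => ?_
    obtain ⟨p, hp, q, hq, rfl⟩ := M.exists_add_mem_mem_orthogonal v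
    have hpS : p ∈ S†.domain := (S†.domain.add_mem_iff_left (ker_le_domain _ (hker hq))).mp hv
    have hSp : S† ⟨p + q, hv⟩ = S† ⟨p, hpS⟩ :=
      apply_eq_iff_sub_mem_ker.mpr (by simpa using hker hq)
    calc ⟪w, S† ⟨p + q, hv⟩⟫_𝕜 = ⟪w, S† ⟨p, hpS⟩⟫_𝕜 := by rw [hSp]
      _ = ψ (S† ⟨p, hpS⟩) := InnerProductSpace.toDual_symm_apply
      _ = ⟪f, p⟫_𝕜 := hψ ⟨p, hp, hpS⟩
      _ = ⟪f, p + q⟫_𝕜 := by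
        rw [inner_add_right, M.inner_right_of_mem_orthogonal hf hq, add_zero]
  obtain ⟨x, -, hx⟩ := S.mem_graph_iff.mp hgraph
  exact ⟨x, hx⟩

theorem range_eq_iff_isBoundedBelow_adjoint (hS : Dense (S.domain : Set E)) (hSc : S.IsClosed)
    (hMc : IsClosed (M : Set F)) (hM : LinearMap.range S.toFun ≤ M) :
    LinearMap.range S.toFun = M ↔ IsBoundedBelow (S†.domRestrict M) := by
  have : CompleteSpace M := hMc.completeSpace_coe
  constructor
  · rintro rfl
    exact isBoundedBelow_adjoint_domRestrict_range hS hSc hMc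
  · exact fun hb => le_antisymm hM (le_range_of_isBoundedBelow_adjoint hS hSc hM hb)

theorem exists_mul_sq_le_iff_isClosed_range_and_range_eq_ker
    {G : Type*} [NormedAddCommGroup G] [NormedSpace 𝕜 G] [CompleteSpace G] {T : F →ₗ.[𝕜] G}
    (hS : Dense (S.domain : Set E)) (hSc : S.IsClosed) (hTc : T.IsClosed)
    (hST : LinearMap.range S.toFun ≤ ker T) :
    (∃ c > (0 : ℝ), ∀ (u : F) (hu₁ : u ∈ T.domain) (hu₂ : u ∈ S†.domain),
        c * ‖u‖ ^ 2 ≤ ‖T ⟨u, hu₁⟩‖ ^ 2 + ‖S† ⟨u, hu₂⟩‖ ^ 2) ↔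
      IsClosed (LinearMap.range T.toFun : Set G) ∧ LinearMap.range S.toFun = ker T := by
  have : CompleteSpace (ker T) := (isClosed_ker hTc).completeSpace_coe
  have horth : (ker T)ᗮ ≤ ker S† := (ker_adjoint hS).symm ▸ Submodule.orthogonal_le hST
  rw [exists_mul_sq_le_iff_isBoundedBelow le_rfl horth,
    isClosed_range_iff_isBoundedBelow_orthogonal_ker hTc,
    range_eq_iff_isBoundedBelow_adjoint hS hSc (isClosed_ker hTc) hST]

end Adjoint

end UnboundedOperator

open UnboundedOperator in
theorem stmt_9_general {𝕜 H₀ H₁ H₂ : Type*} [RCLike 𝕜]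
    [NormedAddCommGroup H₀] [InnerProductSpace 𝕜 H₀] [CompleteSpace H₀]
    [NormedAddCommGroup H₁] [InnerProductSpace 𝕜 H₁] [CompleteSpace H₁]
    [NormedAddCommGroup H₂] [NormedSpace 𝕜 H₂] [CompleteSpace H₂]
    (S : H₀ →ₗ.[𝕜] H₁) (T : H₁ →ₗ.[𝕜] H₂)
    (hSdense : Dense (S.domain : Set H₀)) (hSclosed : S.IsClosed) (hTclosed : T.IsClosed)
    (hST : (Set.range fun x : S.domain => S x) ⊆
      {u : H₁ | ∃ hu : u ∈ T.domain, T ⟨u, hu⟩ = 0}) :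
    (∃ c > (0 : ℝ), ∀ (u : H₁) (hu₁ : u ∈ T.domain) (hu₂ : u ∈ S.adjoint.domain),
        c * ‖u‖ ^ 2 ≤ ‖T ⟨u, hu₁⟩‖ ^ 2 + ‖S.adjoint ⟨u, hu₂⟩‖ ^ 2) ↔
      (IsClosed (Set.range fun x : S.domain => S x) ∧
        IsClosed (Set.range fun x : T.domain => T x) ∧
        {u : H₁ | ∃ hu : u ∈ T.domain, T ⟨u, hu⟩ = 0} =
          Set.range fun x : S.domain => S x) := by
  have hST' : LinearMap.range S.toFun ≤ ker T := fun y hy => mem_ker.mpr (hST hy)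
  rw [exists_mul_sq_le_iff_isClosed_range_and_range_eq_ker hSdense hSclosed hTclosed hST',
    ← coe_ker, ← coe_range_toFun, ← coe_range_toFun, SetLike.coe_set_eq]
  exact ⟨fun ⟨hT, h⟩ => ⟨h ▸ isClosed_ker hTclosed, hT, h.symm⟩, fun ⟨_, hT, h⟩ => ⟨hT, h.symm⟩⟩

/-- Proposition 5.2(3), estimate form: for densely defined closed operators
`S : H₀ →ₗ.[ℂ] H₁`, `T : H₁ →ₗ.[ℂ] H₂` with `range S ⊆ ker T`, the estimate
`c ‖u‖² ≤ ‖T u‖² + ‖S† u‖²` for all `u ∈ dom T ∩ dom S†` (for some `c > 0`) holds if and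
only if `range S` and `range T` are closed and `ker T = range S`. -/
theorem stmt_9 {H₀ H₁ H₂ : Type*}
    [NormedAddCommGroup H₀] [InnerProductSpace ℂ H₀] [CompleteSpace H₀]
    [NormedAddCommGroup H₁] [InnerProductSpace ℂ H₁] [CompleteSpace H₁]
    [NormedAddCommGroup H₂] [InnerProductSpace ℂ H₂] [CompleteSpace H₂]
    (S : H₀ →ₗ.[ℂ] H₁) (T : H₁ →ₗ.[ℂ] H₂)
    (hSdense : Dense (S.domain : Set H₀)) (hTdense : Dense (T.domain : Set H₁))
    (hSclosed : S.IsClosed) (hTclosed : T.IsClosed)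
    (hST : (Set.range fun x : S.domain => S x) ⊆
      {u : H₁ | ∃ hu : u ∈ T.domain, T ⟨u, hu⟩ = 0}) :
    (∃ c > (0 : ℝ), ∀ (u : H₁) (hu₁ : u ∈ T.domain) (hu₂ : u ∈ S.adjoint.domain),
        c * ‖u‖ ^ 2 ≤ ‖T ⟨u, hu₁⟩‖ ^ 2 + ‖S.adjoint ⟨u, hu₂⟩‖ ^ 2) ↔
      (IsClosed (Set.range fun x : S.domain => S x) ∧
        IsClosed (Set.range fun x : T.domain => T x) ∧
        {u : H₁ | ∃ hu : u ∈ T.domain, T ⟨u, hu⟩ = 0} =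
          Set.range fun x : S.domain => S x) :=
  stmt_9_general S T hSdense hSclosed hTclosed hST
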